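/- Fix α > 0 and set a_n := (h(nα) − h(α))/log n for n ≥ 2, where h(x) := (log Γ(x+1))/x. Then the sequence (a_n)_{n≥2} is strictly increasing. -/

import Mathlib

open Real

/-- `h x = log Γ(x+1) / x`. -/
noncomputable def hGamma (x : ℝ) : ℝ := Real.log (Real.Gamma (x + 1)) / x

/-!
In the variable `t = log x`, the quotient `(h (x α) - h α) / log x` is a secant slope of
`t ↦ h (exp t)`, so it suffices that this function is strictly convex. Since `h x` is the average of
`ψ (s x + 1)` over `s ∈ [0, 1]`, where `ψ = (log Γ)'`, and multiplying `x` by `s` translates `t`,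
this follows from strict convexity of `t ↦ ψ (exp t + 1)`. Up to a positive factor, the second
derivative of the latter is `∑ (1 / y ^ 2 - 2 x / y ^ 3)` over `y = x + 1, x + 2, …`, which
telescoping bounds from below by `1 / (x + 1) - x / (x + 1 / 2) ^ 2 > 0`.
-/

open Filter MeasureTheory Set Topology

section Convexity

variable {E : Type*} [AddCommGroup E] [Module ℝ E] {S : Set E}

lemma convexOn_of_tendsto {ι : Type*} {l : Filter ι} [l.NeBot] {F : ι → E → ℝ} {f : E → ℝ}
    (hF : ∀ i, ConvexOn ℝ S (F i)) (hlim : ∀ x ∈ S, Tendsto (fun i => F i x) l (𝓝 (f x))) :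
    ConvexOn ℝ S f := by
  obtain ⟨i₀⟩ := l.nonempty_of_neBot
  refine ⟨(hF i₀).1, fun x hx y hy a b ha hb hab => ?_⟩
  exact le_of_tendsto_of_tendsto' (hlim _ ((hF i₀).1 hx hy ha hb hab))
    (((hlim x hx).const_smul a).add ((hlim y hy).const_smul b))
    fun i => (hF i).2 hx hy ha hb hab

lemma strictConvexOn_intervalIntegral {F : ℝ → E → ℝ} {a b : ℝ} (hab : a < b)
    (hF : ∀ s ∈ Ioo a b, StrictConvexOn ℝ S (F s))
    (hint : ∀ x ∈ S, IntervalIntegrable (fun s => F s x) volume a b) :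
    StrictConvexOn ℝ S (fun x => ∫ s in a..b, F s x) := by
  have hS : Convex ℝ S := (hF _ ⟨left_lt_add_div_two.2 hab, add_div_two_lt_right.2 hab⟩).1
  refine ⟨hS, fun x hx y hy hxy p q hp hq hpq => ?_⟩
  have hcomb : IntervalIntegrable (fun s => p * F s x + q * F s y) volume a b :=
    ((hint x hx).const_mul p).add ((hint y hy).const_mul q)
  have hmid := hint _ (hS hx hy hp.le hq.le hpq)
  have hgap : 0 < ∫ s in a..b, (p * F s x + q * F s y - F s (p • x + q • y)) :=
    intervalIntegral.intervalIntegral_pos_of_pos_on (hcomb.sub hmid)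
      (fun s hs => sub_pos.2 ((hF s hs).2 hx hy hxy hp hq hpq)) hab
  rw [intervalIntegral.integral_sub hcomb hmid,
    intervalIntegral.integral_add ((hint x hx).const_mul p) ((hint y hy).const_mul q),
    intervalIntegral.integral_const_mul, intervalIntegral.integral_const_mul] at hgap
  exact sub_pos.1 hgap

end Convexity

section CompExp

variable {f f' f'' : ℝ → ℝ}

lemma hasDerivAt_comp_exp (hf : ∀ x, 0 < x → HasDerivAt f (f' x) x) (t : ℝ) :
    HasDerivAt (fun t => f (exp t)) (exp t * f' (exp t)) t :=
  ((hf _ (exp_pos t)).comp t (hasDerivAt_exp t)).congr_deriv (mul_comm _ _)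

lemma hasDerivAt_exp_mul_comp_exp (hf' : ∀ x, 0 < x → HasDerivAt f' (f'' x) x) (t : ℝ) :
    HasDerivAt (fun t => exp t * f' (exp t))
      (exp t * (f' (exp t) + exp t * f'' (exp t))) t :=
  ((hasDerivAt_exp t).mul (hasDerivAt_comp_exp hf' t)).congr_deriv (by ring)

lemma convexOn_comp_exp (hf : ∀ x, 0 < x → HasDerivAt f (f' x) x)
    (hf' : ∀ x, 0 < x → HasDerivAt f' (f'' x) x) (h : ∀ x, 0 < x → 0 ≤ f' x + x * f'' x) :
    ConvexOn ℝ univ (fun t => f (exp t)) :=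
  convexOn_of_hasDerivWithinAt2_nonneg convex_univ
    (fun t _ => (hasDerivAt_comp_exp hf t).continuousAt.continuousWithinAt)
    (fun t _ => (hasDerivAt_comp_exp hf t).hasDerivWithinAt)
    (fun t _ => (hasDerivAt_exp_mul_comp_exp hf' t).hasDerivWithinAt)
    fun t _ => mul_nonneg (exp_pos t).le (h _ (exp_pos t))

lemma strictConvexOn_comp_exp (hf : ∀ x, 0 < x → HasDerivAt f (f' x) x)
    (hf' : ∀ x, 0 < x → HasDerivAt f' (f'' x) x) (h : ∀ x, 0 < x → 0 < f' x + x * f'' x) :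
    StrictConvexOn ℝ univ (fun t => f (exp t)) := by
  refine strictConvexOn_univ_of_deriv2_pos
    (continuous_iff_continuousAt.2 fun t => (hasDerivAt_comp_exp hf t).continuousAt) fun t => ?_
  rw [Function.iterate_succ_apply, Function.iterate_one,
    funext fun t => (hasDerivAt_comp_exp hf t).deriv, (hasDerivAt_exp_mul_comp_exp hf' t).deriv]
  exact mul_pos (exp_pos t) (h _ (exp_pos t))

end CompExp

/-- The digamma function `ψ = Γ' / Γ` of a real variable, in analogy with `Complex.digamma`. -/
noncomputable def realDigamma : ℝ → ℝ := logDeriv Gamma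

/-- The approximants `log (x + n) - ∑ i < n, 1 / (x + i)` of `realDigamma x`. The argument of the
logarithm is `x + n` rather than the customary `n` so that every approximant, and not only the
limit, becomes convex after the substitution `x = exp t + 1`. -/
noncomputable def realDigammaSeq (n : ℕ) (x : ℝ) : ℝ :=
  log (x + n) - ∑ i ∈ Finset.range n, 1 / (x + i)

section Digamma

variable {x : ℝ}

lemma log_Gamma_add_one (hx : 0 < x) : log (Gamma (x + 1)) = log (Gamma x) + log x := by
  rw [Gamma_add_one hx.ne', log_mul hx.ne' (Gamma_pos_of_pos hx).ne', add_comm]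

lemma hasDerivAt_log_Gamma (hx : 0 < x) :
    HasDerivAt (fun y => log (Gamma y)) (realDigamma x) x :=
  (differentiableOn_Gamma_Ioi.differentiableAt (Ioi_mem_nhds hx)).hasDerivAt.log
    (Gamma_pos_of_pos hx).ne'

lemma realDigamma_add_one (hx : 0 < x) : realDigamma (x + 1) = realDigamma x + 1 / x := by
  have hshift : HasDerivAt (fun y => log (Gamma (y + 1))) (realDigamma (x + 1)) x :=
    (hasDerivAt_log_Gamma (by positivity)).comp_add_const x 1
  have hsum : HasDerivAt (fun y => log (Gamma y) + log y) (realDigamma x + 1 / x) x := by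
    simpa only [one_div] using (hasDerivAt_log_Gamma hx).fun_add (hasDerivAt_log hx.ne')
  refine hshift.unique (hsum.congr_of_eventuallyEq ?_)
  filter_upwards [Ioi_mem_nhds hx] with y hy using log_Gamma_add_one hy

lemma realDigamma_add_natCast (hx : 0 < x) (n : ℕ) :
    realDigamma (x + n) = realDigamma x + ∑ i ∈ Finset.range n, 1 / (x + i) := by
  induction n with
  | zero => simp
  | succ n ih =>
    rw [Finset.sum_range_succ, ← add_assoc, ← ih, Nat.cast_succ, ← add_assoc,
      realDigamma_add_one (by positivity)]

lemma slope_log_Gamma_add_one (hx : 0 < x) : slope (log ∘ Gamma) x (x + 1) = log x := by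
  simp [slope_def_field, log_Gamma_add_one hx]

lemma realDigamma_le_log (hx : 0 < x) : realDigamma x ≤ log x :=
  slope_log_Gamma_add_one hx ▸ convexOn_log_Gamma.le_slope_of_hasDerivAt hx
    (by simp only [mem_Ioi]; positivity) (lt_add_one x) (hasDerivAt_log_Gamma hx)

lemma log_le_realDigamma_add_one (hx : 0 < x) : log x ≤ realDigamma (x + 1) :=
  slope_log_Gamma_add_one hx ▸ convexOn_log_Gamma.slope_le_of_hasDerivAt hx
    (by simp only [mem_Ioi]; positivity) (lt_add_one x) (hasDerivAt_log_Gamma (by positivity))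

lemma monotoneOn_realDigamma : MonotoneOn realDigamma (Ioi 0) := by
  refine (convexOn_log_Gamma.monotoneOn_deriv fun x hx =>
    (hasDerivAt_log_Gamma hx).differentiableAt).congr fun x hx => (hasDerivAt_log_Gamma hx).deriv

lemma tendsto_realDigammaSeq (hx : 0 < x) :
    Tendsto (fun n => realDigammaSeq n x) atTop (𝓝 (realDigamma x)) := by
  have hinv : Tendsto (fun n : ℕ => 1 / (x + n)) atTop (𝓝 0) :=
    (tendsto_const_nhds (x := (1 : ℝ))).div_atTop
      (tendsto_atTop_add_const_left _ x tendsto_natCast_atTop_atTop)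
  have hupper : Tendsto (fun n : ℕ => realDigamma x + 1 / (x + n)) atTop (𝓝 (realDigamma x)) := by
    simpa only [add_zero] using hinv.const_add (realDigamma x)
  refine tendsto_of_tendsto_of_tendsto_of_le_of_le tendsto_const_nhds hupper (fun n => ?_)
    fun n => ?_
  · have h := realDigamma_le_log (x := x + n) (by positivity)
    rw [realDigamma_add_natCast hx] at h
    exact le_sub_iff_add_le.2 h
  · have h := log_le_realDigamma_add_one (x := x + n) (by positivity)
    rw [realDigamma_add_one (by positivity), realDigamma_add_natCast hx] at h
    change log (x + n) - ∑ i ∈ Finset.range n, 1 / (x + i) ≤ realDigamma x + 1 / (x + n)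
    linarith

lemma hasDerivAt_log_add_const {c : ℝ} (hx : x + c ≠ 0) :
    HasDerivAt (fun y => log (y + c)) (1 / (x + c)) x :=
  ((hasDerivAt_id x).add_const c).log hx

lemma hasDerivAt_one_div_add_const_pow {c : ℝ} (hx : x + c ≠ 0) (k : ℕ) :
    HasDerivAt (fun y => 1 / (y + c) ^ k) (-(k / (x + c) ^ (k + 1))) x := by
  have hpow : HasDerivAt (fun y => (y + c) ^ k) (k * (x + c) ^ (k - 1)) x :=
    (hasDerivAt_pow k (x + c)).comp_add_const x c
  simp only [one_div]
  refine (hpow.fun_inv (pow_ne_zero k hx)).congr_deriv ?_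
  rcases k with _ | k
  · simp
  · rw [Nat.add_sub_cancel]
    field_simp
    ring

lemma hasDerivAt_realDigammaSeq (n : ℕ) (hx : 0 < x) :
    HasDerivAt (realDigammaSeq n) (1 / (x + n) + ∑ i ∈ Finset.range n, 1 / (x + i) ^ 2) x := by
  have hsum : HasDerivAt (fun y => ∑ i ∈ Finset.range n, 1 / (y + (i : ℝ)))
      (∑ i ∈ Finset.range n, -(1 / (x + i) ^ 2)) x := by
    refine HasDerivAt.fun_sum fun i _ => ?_
    simpa using hasDerivAt_one_div_add_const_pow (c := i) (by positivity) 1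
  refine ((hasDerivAt_log_add_const (by positivity)).sub hsum).congr_deriv ?_
  rw [Finset.sum_neg_distrib, sub_neg_eq_add]

lemma hasDerivAt_deriv_realDigammaSeq (n : ℕ) (hx : 0 < x) :
    HasDerivAt (fun y : ℝ => 1 / (y + n) + ∑ i ∈ Finset.range n, 1 / (y + i) ^ 2)
      (-(1 / (x + n) ^ 2) - ∑ i ∈ Finset.range n, 2 / (x + i) ^ 3) x := by
  have hsum : HasDerivAt (fun y => ∑ i ∈ Finset.range n, 1 / (y + (i : ℝ)) ^ 2)
      (∑ i ∈ Finset.range n, -(2 / (x + i) ^ 3)) x :=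
    HasDerivAt.fun_sum fun i _ => hasDerivAt_one_div_add_const_pow (by positivity) 2
  have hlead : HasDerivAt (fun y : ℝ => 1 / (y + n)) (-(1 / (x + n) ^ 2)) x := by
    simpa using hasDerivAt_one_div_add_const_pow (c := n) (by positivity) 1
  refine (hlead.add hsum).congr_deriv ?_
  rw [Finset.sum_neg_distrib, ← sub_eq_add_neg]

end Digamma

lemma one_div_sub_one_div_add_one_le {y : ℝ} (hy : 0 < y) : 1 / y - 1 / (y + 1) ≤ 1 / y ^ 2 := by
  have hgap : 1 / y ^ 2 - (1 / y - 1 / (y + 1)) = 1 / (y ^ 2 * (y + 1)) := by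
    field_simp
    ring
  exact sub_nonneg.1 (hgap ▸ by positivity)

lemma two_div_pow_three_le_sub {y : ℝ} (hy : 1 / 2 < y) :
    2 / y ^ 3 ≤ 1 / (y - 1 / 2) ^ 2 - 1 / (y + 1 / 2) ^ 2 := by
  have hsub : 0 < y - 1 / 2 := sub_pos.2 hy
  have hsq : 0 < y ^ 2 - 1 / 4 := by nlinarith
  calc 2 / y ^ 3 = 2 * y / (y ^ 2) ^ 2 := by field_simp
    _ ≤ 2 * y / (y ^ 2 - 1 / 4) ^ 2 := by gcongr; linarith
    _ = 2 * y / ((y - 1 / 2) * (y + 1 / 2)) ^ 2 := by ring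
    _ = 1 / (y - 1 / 2) ^ 2 - 1 / (y + 1 / 2) ^ 2 := by
      rw [div_sub_div _ _ (pow_ne_zero 2 hsub.ne') (by positivity)]
      ring

lemma le_sum_one_div_sq_sub {x : ℝ} (hx : 0 ≤ x) (n : ℕ) :
    1 / (x + 1) - x / (x + 1 / 2) ^ 2 - (1 / (x + 1 + n) - x / (x + n + 1 / 2) ^ 2) ≤
      ∑ i ∈ Finset.range n, (1 / (x + 1 + i) ^ 2 - 2 * x / (x + 1 + i) ^ 3) := by
  set g : ℕ → ℝ := fun i => x / (x + i + 1 / 2) ^ 2 - 1 / (x + 1 + i) with hg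
  have hstep (i : ℕ) : g (i + 1) - g i ≤ 1 / (x + 1 + i) ^ 2 - 2 * x / (x + 1 + i) ^ 3 := by
    have hone := one_div_sub_one_div_add_one_le (y := x + 1 + i) (by positivity)
    have htwo := mul_le_mul_of_nonneg_left
      (two_div_pow_three_le_sub (y := x + 1 + i) (by linarith [i.cast_nonneg (α := ℝ)])) hx
    rw [show x + 1 + i - 1 / 2 = x + i + 1 / 2 by ring] at htwo
    simp only [hg, Nat.cast_succ]
    rw [show x + (i + 1 : ℝ) + 1 / 2 = x + 1 + i + 1 / 2 by ring, ← add_assoc (x + 1)]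
    linear_combination hone + htwo
  calc _ = g n - g 0 := by simp only [hg, Nat.cast_zero, add_zero]; ring
    _ = ∑ i ∈ Finset.range n, (g (i + 1) - g i) := (Finset.sum_range_sub g n).symm
    _ ≤ _ := Finset.sum_le_sum fun i _ => hstep i

lemma one_div_four_mul_add_one_pow_three_le {x : ℝ} (hx : 0 ≤ x) :
    1 / (4 * (x + 1) ^ 3) ≤ 1 / (x + 1) - x / (x + 1 / 2) ^ 2 := by
  calc 1 / (4 * (x + 1) ^ 3) = 1 / (4 * ((x + 1) * (x + 1) ^ 2)) := by ring
    _ ≤ 1 / (4 * ((x + 1) * (x + 1 / 2) ^ 2)) := by gcongr; norm_num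
    _ = 1 / (x + 1) - x / (x + 1 / 2) ^ 2 := by
      rw [div_sub_div _ _ (by positivity) (by positivity),
        div_eq_div_iff (by positivity) (by positivity)]
      ring

lemma one_div_four_mul_add_one_pow_three_le_add_sum {x : ℝ} (hx : 0 ≤ x) (n : ℕ) :
    1 / (4 * (x + 1) ^ 3) ≤ 1 / (x + 1 + n) - x / (x + 1 + n) ^ 2 +
      ∑ i ∈ Finset.range n, (1 / (x + 1 + i) ^ 2 - 2 * x / (x + 1 + i) ^ 3) := by
  have htail : x / (x + 1 + n) ^ 2 ≤ x / (x + n + 1 / 2) ^ 2 := by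
    rw [add_right_comm x 1]
    gcongr
    norm_num
  linarith [one_div_four_mul_add_one_pow_three_le hx, le_sum_one_div_sq_sub hx n]

lemma hasDerivAt_log_add_one_sub {x : ℝ} (hx : x + 1 ≠ 0) :
    HasDerivAt (fun y => log (y + 1) - 1 / (y + 1)) (1 / (x + 1) + 1 / (x + 1) ^ 2) x := by
  simpa using (hasDerivAt_log_add_const (c := 1) hx).fun_sub
    (hasDerivAt_one_div_add_const_pow (c := 1) hx 1)

lemma hasDerivAt_deriv_log_add_one_sub {x : ℝ} (hx : x + 1 ≠ 0) :
    HasDerivAt (fun y => 1 / (y + 1) + 1 / (y + 1) ^ 2)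
      (-(1 / (x + 1) ^ 2) - 2 / (x + 1) ^ 3) x := by
  simpa [sub_eq_add_neg] using (hasDerivAt_one_div_add_const_pow (c := 1) hx 1).fun_add
    (hasDerivAt_one_div_add_const_pow (c := 1) hx 2)

lemma strictConvexOn_log_exp_add_one_sub :
    StrictConvexOn ℝ univ (fun t => log (exp t + 1) - 1 / (exp t + 1)) := by
  refine strictConvexOn_comp_exp (f := fun x => log (x + 1) - 1 / (x + 1))
    (fun x hx => hasDerivAt_log_add_one_sub (by positivity))
    (fun x hx => hasDerivAt_deriv_log_add_one_sub (by positivity))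
    fun x hx => ?_
  have hsecond : 1 / (x + 1) + 1 / (x + 1) ^ 2 + x * (-(1 / (x + 1) ^ 2) - 2 / (x + 1) ^ 3) =
      2 / (x + 1) ^ 3 := by
    field_simp
    ring
  rw [hsecond]
  positivity

/-- The subtracted strictly convex term makes strict convexity survive the limit `n → ∞`. It is a
solution `f` of `f' + x f'' = 1 / (4 (x + 1) ^ 3)`, a lower bound independent of `n`. -/
lemma convexOn_realDigammaSeq_exp_add_one_sub (n : ℕ) :
    ConvexOn ℝ univ (fun t => realDigammaSeq n (exp t + 1) -
      1 / 8 * (log (exp t + 1) - 1 / (exp t + 1))) := by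
  refine convexOn_comp_exp
    (f := fun x => realDigammaSeq n (x + 1) - 1 / 8 * (log (x + 1) - 1 / (x + 1)))
    (fun x hx => ((hasDerivAt_realDigammaSeq n (by positivity)).comp_add_const x 1).sub
      ((hasDerivAt_log_add_one_sub (by positivity)).const_mul _))
    (fun x hx => ((hasDerivAt_deriv_realDigammaSeq n (by positivity)).comp_add_const x 1).sub
      ((hasDerivAt_deriv_log_add_one_sub (by positivity)).const_mul _))
    fun x hx => ?_
  have hmain := one_div_four_mul_add_one_pow_three_le_add_sum hx.le n
  have hgap : 1 / 8 * (1 / (x + 1) + 1 / (x + 1) ^ 2 +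
      x * (-(1 / (x + 1) ^ 2) - 2 / (x + 1) ^ 3)) = 1 / (4 * (x + 1) ^ 3) := by
    field_simp
    ring
  have hsum : ∑ i ∈ Finset.range n, 2 * x / (x + 1 + i) ^ 3 =
      x * ∑ i ∈ Finset.range n, 2 / (x + 1 + i) ^ 3 := by
    rw [Finset.mul_sum]
    exact Finset.sum_congr rfl fun i _ => by ring
  rw [Finset.sum_sub_distrib, hsum, ← hgap] at hmain
  linear_combination hmain

theorem strictConvexOn_realDigamma_exp_add_one :
    StrictConvexOn ℝ univ (fun t => realDigamma (exp t + 1)) := by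
  have hconv : ConvexOn ℝ univ (fun t => realDigamma (exp t + 1) -
      1 / 8 * (log (exp t + 1) - 1 / (exp t + 1))) :=
    convexOn_of_tendsto convexOn_realDigammaSeq_exp_add_one_sub fun t _ =>
      (tendsto_realDigammaSeq (by positivity)).sub_const _
  refine ⟨convex_univ, fun s hs t ht hst a b ha hb hab => ?_⟩
  have hle := hconv.2 hs ht ha.le hb.le hab
  have hlt := strictConvexOn_log_exp_add_one_sub.2 hs ht hst ha hb hab
  simp only [smul_eq_mul] at hle hlt ⊢
  linarith

lemma strictConvexOn_realDigamma_mul_exp_add_one {s : ℝ} (hs : 0 < s) :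
    StrictConvexOn ℝ univ (fun t => realDigamma (s * exp t + 1)) := by
  simpa [Function.comp_def, exp_add, exp_log hs, mul_comm] using
    strictConvexOn_realDigamma_exp_add_one.translate_left (log s)

lemma intervalIntegrable_realDigamma_mul_add_one {x : ℝ} (hx : 0 ≤ x) :
    IntervalIntegrable (fun s => realDigamma (s * x + 1)) volume 0 1 := by
  refine MonotoneOn.intervalIntegrable ?_
  rw [uIcc_of_le zero_le_one]
  intro s hs t ht hst
  have hs0 : 0 ≤ s := hs.1
  have ht0 : 0 ≤ t := ht.1
  exact monotoneOn_realDigamma (by simp only [mem_Ioi]; positivity)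
    (by simp only [mem_Ioi]; positivity) (by gcongr)

lemma hGamma_eq_integral_realDigamma {x : ℝ} (hx : 0 < x) :
    hGamma x = ∫ s in 0..1, realDigamma (s * x + 1) := by
  have hderiv (s : ℝ) (hs : s ∈ uIcc 0 1) :
      HasDerivAt (fun s => log (Gamma (s * x + 1)) / x) (realDigamma (s * x + 1)) s := by
    rw [uIcc_of_le zero_le_one] at hs
    have hs0 : 0 ≤ s := hs.1
    refine (((hasDerivAt_log_Gamma (by positivity)).comp s
      (((hasDerivAt_id s).mul_const x).add_const 1)).div_const x).congr_deriv ?_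
    simp [hx.ne']
  rw [intervalIntegral.integral_eq_sub_of_hasDerivAt hderiv
    (intervalIntegrable_realDigamma_mul_add_one hx.le)]
  simp [hGamma]

theorem strictConvexOn_hGamma_exp : StrictConvexOn ℝ univ (fun t => hGamma (exp t)) :=
  (strictConvexOn_intervalIntegral zero_lt_one
    (fun _ hs => strictConvexOn_realDigamma_mul_exp_add_one hs.1)
    fun t _ => intervalIntegrable_realDigamma_mul_add_one (exp_pos t).le).congr
    fun t _ => (hGamma_eq_integral_realDigamma (exp_pos t)).symm

theorem aSeq_strictMonoOn_general {α : ℝ} (hα : 0 < α) :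
    StrictMonoOn (fun x : ℝ => (hGamma (x * α) - hGamma α) / log x) (Ioi 0 \ {1}) := by
  have hslope {x : ℝ} (hx : 0 < x) : (hGamma (x * α) - hGamma α) / log x =
      (hGamma (exp (log x + log α)) - hGamma (exp (log α))) / (log x + log α - log α) := by
    rw [exp_add, exp_log hx, exp_log hα, add_sub_cancel_right]
  rintro x ⟨hx, hx1⟩ y ⟨hy, hy1⟩ hxy
  simp only [hslope hx, hslope hy]
  have hne {z : ℝ} (hz : 0 < z) (hz1 : z ≠ 1) : log z + log α ≠ log α := by
    simpa using log_ne_zero_of_pos_of_ne_one hz hz1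
  exact strictConvexOn_hGamma_exp.secant_strict_mono (mem_univ _) (mem_univ _) (mem_univ _)
    (hne hx hx1) (hne hy hy1) (by gcongr)

/-- For fixed `α > 0`, the sequence `a_n = (h(nα) - h(α)) / log n` is strictly increasing
on `n ≥ 2`. -/
theorem aSeq_strictMonoOn (α : ℝ) (hα : 0 < α) :
    StrictMonoOn (fun n : ℕ => (hGamma (n * α) - hGamma α) / Real.log n)
      {n : ℕ | 2 ≤ n} := by
  have hcast (n : ℕ) (hn : 2 ≤ n) : (n : ℝ) ∈ Ioi 0 \ {1} :=
    ⟨mem_Ioi.2 (Nat.cast_pos.2 (two_pos.trans_le hn)), Nat.cast_ne_one.2 (Nat.ne_of_gt hn)⟩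
  exact (aSeq_strictMonoOn_general hα).comp (Nat.strictMono_cast.strictMonoOn _) hcast
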